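/- arXiv:1307.2427 — 3 statements merged into one kernel-verified Lean document; each statement's English description precedes it below -/
import Mathlib

section
/- Let ⟨N, E, f⟩ be a deterministic, strongly connected synchronized state machine and let σ = t₁ t₂ … t_r be a synchronizing transition sequence for P and p̄ ∈ P, with corresponding directed path ρ = ⟨p₀ t₁ p₁ … t_r p_r⟩, p̄ = p_r. For each i ∈ {1, …, r}, if M is a marking with exactly one token and M →(f(t₁)…f(t_i)) M', then M' places its token at some place p_j of the path with j ≥ i, i.e. there exists j with i ≤ j ≤ r such that M'(p_j) = 1 and M'(p) = 0 for p ≠ p_j. -/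
/-!
The invariant that survives induction is that the token never lags behind the path: after `i`
events it lies at `p_i` or at a place the path has not visited yet. A token at `p_i` moves along
with the path. If a token ahead of the path fires under the event `f(t_{i+1})`, then by (C1) it
fires some `t_m` of the sequence, with `m > i + 1` as its place was unvisited, and (C2) says that
a transition repeating an earlier label cannot lead back to a visited place. Since the path visits
all places, such a token lies at some `p_j` with `j ≥ i`.
-/

open scoped Classical BigOperators

/-- A synchronized Petri net `⟨N, E, f⟩`: `Pre`/`Post` incidence functions
and a labeling `f` of transitions by input events. -/
structure SyncPN (P T E : Type) where
  Pre : P → T → ℕ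
  Post : P → T → ℕ
  f : T → E

/-- A transition `t` is enabled at marking `M` if `M(p) ≥ Pre(p,t)` for all `p`. -/
def enabled {P T E : Type} (N : SyncPN P T E) (M : P → ℕ) (t : T) : Prop :=
  ∀ p, N.Pre p t ≤ M p

/-- Occurrence of input event `e` at marking `M`: all enabled transitions labeled `e`
fire simultaneously: `step M e (p) = M(p) + Σ Post(p,t) − Σ Pre(p,t)`,
the sums ranging over enabled transitions labeled `e`. -/
noncomputable def step {P T E : Type} [Fintype T] (N : SyncPN P T E) (M : P → ℕ)
    (e : E) : P → ℕ := fun p =>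
  M p + (∑ t : T, if N.f t = e ∧ enabled N M t then N.Post p t else 0)
      - ∑ t : T, if N.f t = e ∧ enabled N M t then N.Pre p t else 0

/-- Extension of `step` to input words: `M →w stepWord N M w`. -/
noncomputable def stepWord {P T E : Type} [Fintype T] (N : SyncPN P T E) (M : P → ℕ)
    (w : List E) : P → ℕ :=
  w.foldl (step N) M

/-- A net is deterministic if no place has two distinct output transitions
sharing the same label. -/
def deterministic {P T E : Type} (N : SyncPN P T E) : Prop :=
  ∀ (p : P) (t t' : T), t ≠ t' → 1 ≤ N.Pre p t → 1 ≤ N.Pre p t' → N.f t ≠ N.f t'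

/-- A state machine: each transition `t` has single input place `ins t`
and single output place `outs t`, with arc weight 1. -/
def isSM {P T E : Type} (N : SyncPN P T E) (ins outs : T → P) : Prop :=
  (∀ p t, N.Pre p t = if p = ins t then 1 else 0) ∧
  (∀ p t, N.Post p t = if p = outs t then 1 else 0)

/-- Strong connectedness of the associated graph of a state machine
(an arc from `ins t` to `outs t` for each transition `t`). -/
def stronglyConnected {P T : Type} (ins outs : T → P) : Prop :=
  ∀ p p' : P, Relation.ReflTransGen (fun a b => ∃ t, ins t = a ∧ outs t = b) p p'

lemma exists_eq_single_of_sum_eq_one {P : Type*} [Fintype P] {M : P → ℕ} (hM : ∑ p, M p = 1) :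
    ∃ q, M = Pi.single q 1 := by
  obtain ⟨q, hq⟩ := (Finsupp.sum_eq_one_iff (Finsupp.equivFunOnFinite.symm M)).mp <| by
    simpa [Finsupp.sum_fintype] using hM
  refine ⟨q, ?_⟩
  simpa only [Finsupp.coe_equivFunOnFinite_symm, Finsupp.single_eq_pi_single] using
    congrArg DFunLike.coe hq

section Net

variable {P T E : Type} [Fintype T] {N : SyncPN P T E} {M : P → ℕ} {e : E}

lemma step_eq_self_of_forall_not_enabled (h : ∀ t, N.f t = e → ¬ enabled N M t) :
    step N M e = M := by
  have hnone : ∀ t, ¬ (N.f t = e ∧ enabled N M t) := fun t ht => h t ht.1 ht.2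
  funext p
  simp only [step, hnone, if_false, Finset.sum_const_zero, add_zero, Nat.sub_zero]

lemma step_eq_of_forall_enabled_iff {t : T} (h : ∀ t', N.f t' = e ∧ enabled N M t' ↔ t' = t) :
    step N M e = fun p => M p + N.Post p t - N.Pre p t := by
  funext p
  simp only [step, h, Finset.sum_ite_eq', Finset.mem_univ, if_true]

lemma stepWord_map_range_succ (w : ℕ → E) (i : ℕ) :
    stepWord N M ((List.range (i + 1)).map w) =
      step N (stepWord N M ((List.range i).map w)) (w i) := by
  simp only [stepWord, List.range_succ, List.map_append, List.map_singleton, List.foldl_concat]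

end Net

section Token

variable {P T E : Type} {N : SyncPN P T E} {ins outs : T → P}

lemma enabled_single_iff (hSM : isSM N ins outs) {q : P} {t : T} :
    enabled N (Pi.single q 1) t ↔ ins t = q := by
  simp only [enabled, hSM.1, Pi.single_apply]
  refine ⟨fun h => ?_, fun h p => by rw [h]⟩
  by_contra hne
  simpa [hne] using h (ins t)

variable [Fintype T]

lemma step_single_of_forall_label_ne (hSM : isSM N ins outs) {q : P} {e : E}
    (h : ∀ t, ins t = q → N.f t ≠ e) : step N (Pi.single q 1) e = Pi.single q 1 :=
  step_eq_self_of_forall_not_enabled fun t hte ht => h t ((enabled_single_iff hSM).mp ht) hte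

lemma step_single_ins (hSM : isSM N ins outs) (hdet : deterministic N) (t : T) :
    step N (Pi.single (ins t) 1) (N.f t) = Pi.single (outs t) 1 := by
  have huniq : ∀ t', N.f t' = N.f t ∧ enabled N (Pi.single (ins t) 1) t' ↔ t' = t := by
    refine fun t' => ⟨fun ⟨hlabel, ht'⟩ => ?_, ?_⟩
    · have hins : ins t' = ins t := (enabled_single_iff hSM).mp ht'
      by_contra hne
      exact hdet (ins t) t' t hne (by simp [hSM.1, hins]) (by simp [hSM.1]) hlabel
    · rintro rfl
      exact ⟨rfl, (enabled_single_iff hSM).mpr rfl⟩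
  rw [step_eq_of_forall_enabled_iff huniq]
  funext p
  simp only [hSM.1, hSM.2, Pi.single_apply, Nat.add_sub_cancel_left]

end Token

/-- The place `q`, if the path `ps` has visited it by time `i`, is the current place `ps i`.
Unlike "`q` is some `ps j` with `i ≤ j`", this is preserved by the events of a synchronizing
transition sequence. -/
def NotBehind {P : Type*} (ps : ℕ → P) (i : ℕ) (q : P) : Prop :=
  ∀ l ≤ i, ps l = q → q = ps i

namespace NotBehind

variable {P : Type*} {ps : ℕ → P} {i : ℕ} {q : P}

lemma zero (ps : ℕ → P) (q : P) : NotBehind ps 0 q := by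
  rintro l hl rfl
  rw [Nat.le_zero.mp hl]

lemma self (ps : ℕ → P) (i : ℕ) : NotBehind ps i (ps i) :=
  fun _ _ _ => rfl

lemma succ_of_ne (h : NotBehind ps i q) (hne : q ≠ ps i) : NotBehind ps (i + 1) q := by
  intro l hl hlq
  rcases Nat.le_succ_iff.mp hl with hl | rfl
  · exact absurd (h l hl hlq) hne
  · exact hlq.symm

lemma exists_eq_of_le {r : ℕ} (h : NotBehind ps i q) (hi : i ≤ r) (hq : ∃ j ≤ r, ps j = q) :
    ∃ j, i ≤ j ∧ j ≤ r ∧ q = ps j := by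
  obtain ⟨j, hj, hjq⟩ := hq
  rcases le_total i j with hij | hji
  · exact ⟨j, hij, hj, hjq.symm⟩
  · exact ⟨i, le_rfl, hi, h j hji hjq⟩

end NotBehind

/-- The sequence `σ = t₁ … t_r` along a directed path `⟨p₀ t₁ p₁ … t_r p_r⟩` satisfies the
conditions (C1) and (C2) of a synchronizing transition sequence. Places are indexed as in the
paper, `ps i = p_i`, while transitions are shifted by one, `ts i = t_{i+1}`. That the path visits
every place and reaches `p̄` only at its end is not included. -/
structure IsSyncPath {P T E : Type} (N : SyncPN P T E) (ins outs : T → P) (r : ℕ)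
    (ps : ℕ → P) (ts : ℕ → T) : Prop where
  ins_eq : ∀ i < r, ins (ts i) = ps i
  outs_eq : ∀ i < r, outs (ts i) = ps (i + 1)
  label_ne_of_forall_ne : ∀ t', (∀ i < r, ts i ≠ t') → ∀ i < r, N.f t' ≠ N.f (ts i)
  label_ne_of_revisit : ∀ i k, i < k → k ≤ r → ps i = ps k →
    ∀ j, j + 1 < k → N.f (ts j) ≠ N.f (ts (k - 1))

namespace IsSyncPath

variable {P T E : Type} {N : SyncPN P T E} {ins outs : T → P} {r : ℕ} {ps : ℕ → P} {ts : ℕ → T}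

lemma exists_eq_of_label_eq (hσ : IsSyncPath N ins outs r ps ts) {i : ℕ} (hi : i < r) {t : T}
    (ht : N.f t = N.f (ts i)) : ∃ m < r, ts m = t := by
  by_contra! hne
  exact hσ.label_ne_of_forall_ne t hne i hi ht

lemma ne_succ_of_label_eq (hσ : IsSyncPath N ins outs r ps ts) {i m : ℕ} (him : i < m)
    (hm : m < r) (hlabel : N.f (ts i) = N.f (ts m)) {l : ℕ} (hl : l ≤ m) :
    ps l ≠ ps (m + 1) := fun heq =>
  hσ.label_ne_of_revisit l (m + 1) (Nat.lt_succ_of_le hl) hm heq i (Nat.succ_lt_succ him) hlabel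

lemma notBehind_outs_of_label_eq (hσ : IsSyncPath N ins outs r ps ts) {i : ℕ} (hi : i < r) {t : T}
    (ht : N.f t = N.f (ts i)) (hins : NotBehind ps i (ins t)) (hne : ins t ≠ ps i) :
    NotBehind ps (i + 1) (outs t) := by
  obtain ⟨m, hm, rfl⟩ := hσ.exists_eq_of_label_eq hi ht
  have him : i < m := by
    by_contra! hmi
    exact hne (hins m hmi (hσ.ins_eq m hm).symm)
  intro l hl hl_eq
  rw [hσ.outs_eq m hm] at hl_eq
  exact absurd hl_eq (hσ.ne_succ_of_label_eq him hm ht.symm (hl.trans him))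

variable [Fintype T]

lemma exists_step_single_notBehind (hσ : IsSyncPath N ins outs r ps ts) (hSM : isSM N ins outs)
    (hdet : deterministic N) {i : ℕ} (hi : i < r) {q : P} (hq : NotBehind ps i q) :
    ∃ q', step N (Pi.single q 1) (N.f (ts i)) = Pi.single q' 1 ∧ NotBehind ps (i + 1) q' := by
  by_cases hcurrent : q = ps i
  · refine ⟨ps (i + 1), ?_, .self ps (i + 1)⟩
    rw [hcurrent, ← hσ.ins_eq i hi, ← hσ.outs_eq i hi]
    exact step_single_ins hSM hdet (ts i)
  by_cases hfire : ∃ t, ins t = q ∧ N.f t = N.f (ts i)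
  · obtain ⟨t, rfl, ht⟩ := hfire
    exact ⟨outs t, ht ▸ step_single_ins hSM hdet t,
      hσ.notBehind_outs_of_label_eq hi ht hq hcurrent⟩
  · push Not at hfire
    exact ⟨q, step_single_of_forall_label_ne hSM hfire, hq.succ_of_ne hcurrent⟩

lemma exists_stepWord_single_notBehind (hσ : IsSyncPath N ins outs r ps ts)
    (hSM : isSM N ins outs) (hdet : deterministic N) (q : P) {i : ℕ} (hi : i ≤ r) :
    ∃ q', stepWord N (Pi.single q 1) ((List.range i).map fun j => N.f (ts j)) = Pi.single q' 1 ∧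
      NotBehind ps i q' := by
  induction i with
  | zero => exact ⟨q, rfl, .zero ps q⟩
  | succ i ih =>
    obtain ⟨x, hx, hx_notBehind⟩ := ih (Nat.le_of_succ_le hi)
    rw [stepWord_map_range_succ, hx]
    exact hσ.exists_step_single_notBehind hSM hdet hi hx_notBehind

end IsSyncPath

theorem STS_invariant_general {P T E : Type} [Fintype P] [Fintype T] {N : SyncPN P T E}
    {ins outs : T → P} (hSM : isSM N ins outs) (hdet : deterministic N) {r : ℕ} {ps : ℕ → P}
    {ts : ℕ → T} (hσ : IsSyncPath N ins outs r ps ts) (hvisit : ∀ p, ∃ i ≤ r, ps i = p)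
    {i : ℕ} (hi : i ≤ r) {M : P → ℕ} (hM : ∑ p, M p = 1) :
    ∃ j, i ≤ j ∧ j ≤ r ∧ stepWord N M ((List.range i).map fun j => N.f (ts j)) =
      fun p => if p = ps j then 1 else 0 := by
  obtain ⟨q, rfl⟩ := exists_eq_single_of_sum_eq_one hM
  obtain ⟨q', hq', hq'_notBehind⟩ := hσ.exists_stepWord_single_notBehind hSM hdet q hi
  obtain ⟨j, hij, hjr, rfl⟩ := hq'_notBehind.exists_eq_of_le hi (hvisit q')
  exact ⟨j, hij, hjr, hq'.trans (funext (Pi.single_apply (ps j) 1))⟩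

/-- Inductive invariant in the proof of Proposition 2: after applying the first `i`
events `f(t₁)…f(t_i)` of a synchronizing transition sequence, a single token can
only be located at some place `ps j` of the path with `j ≥ i`. -/
theorem STS_invariant {P T E : Type} [Fintype P] [Fintype T]
    (N : SyncPN P T E) (ins outs : T → P)
    (hSM : isSM N ins outs) (hdet : deterministic N)
    (hsc : stronglyConnected ins outs)
    (r : ℕ) (ps : ℕ → P) (ts : ℕ → T) (pbar : P)
    (hpath : ∀ i < r, ins (ts i) = ps i ∧ outs (ts i) = ps (i + 1))
    (hvisit : ∀ p : P, ∃ i ≤ r, ps i = p)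
    (hend : ps r = pbar)
    (hnotbar : ∀ i < r, ps i ≠ pbar)
    (hC1 : ∀ t' : T, (∀ i < r, ts i ≠ t') → ∀ i < r, N.f t' ≠ N.f (ts i))
    (hC2 : ∀ i k, i < k → k ≤ r → ps i = ps k →
      ∀ j, j + 1 < k → N.f (ts j) ≠ N.f (ts (k - 1))) :
    ∀ i, 1 ≤ i → i ≤ r → ∀ M M' : P → ℕ, (∑ p : P, M p = 1) →
      stepWord N M ((List.range i).map fun j => N.f (ts j)) = M' →
      ∃ j, i ≤ j ∧ j ≤ r ∧ M' = fun p => if p = ps j then 1 else 0 := by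
  rintro i - hi M _ hM rfl
  exact STS_invariant_general hSM hdet
    ⟨fun i hi => (hpath i hi).1, fun i hi => (hpath i hi).2, hC1, hC2⟩ hvisit hi hM
end

section
/- Let ⟨N, E, f⟩ be a deterministic, strongly connected synchronized state machine containing k tokens, let σ = t₁ … t_r be a synchronizing transition sequence for P and p̄ ∈ P, and let w = f(t₁) … f(t_r). Then w^k (the word w concatenated k times) is a k-SS moving all tokens to p̄: for every marking M with Σ_{p∈P} M(p) = k it holds M →(w^k) M̄, where M̄(p̄) = k and M̄(p) = 0 for p ≠ p̄. -/
open scoped Classical BigOperators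

/-!
In a deterministic state machine an event moves at most one token out of each place. A single token
therefore follows a deterministic automaton on the places: if the place where the automaton starts
is marked, then so is the place where it ends. Along the label word of an STS the automaton started
anywhere is, after `j` letters, either at the `j`-th place of the path or at a place not visited
before: by (C1) an off-path token can only be moved along a later transition of the path, and by
(C2) it then lands on a place not visited yet. As the path visits everything, the automaton ends
in `p̄`, which no letter of the word leaves. Hence every repetition of the word brings at least one
more token to `p̄`, until all of them are there.
-/

section Word

variable {P T E : Type} [Fintype T] (N : SyncPN P T E)

theorem stepWord_cons (M : P → ℕ) (e : E) (w : List E) :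
    stepWord N M (e :: w) = stepWord N (step N M e) w :=
  rfl

theorem stepWord_append (M : P → ℕ) (v w : List E) :
    stepWord N M (v ++ w) = stepWord N (stepWord N M v) w :=
  List.foldl_append

/-- The set of transitions fired by the occurrence of `e` at `M`. -/
noncomputable def fired (M : P → ℕ) (e : E) : Finset T :=
  {t | N.f t = e ∧ enabled N M t}

theorem step_apply (M : P → ℕ) (e : E) (p : P) :
    step N M e p = M p + ∑ t ∈ fired N M e, N.Post p t - ∑ t ∈ fired N M e, N.Pre p t := by
  simp only [step, fired, Finset.sum_filter]

end Word

section Token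

variable {P T E : Type}

/-- One step of the automaton followed by a single token of a deterministic state machine: under
`e` a token in `q` moves along the output transition of `q` labeled `e`, and stays in `q` if there
is none. Determinism makes that transition unique; without it, an arbitrary one is chosen. -/
noncomputable def tokenStep (N : SyncPN P T E) (ins outs : T → P) (q : P) (e : E) : P :=
  if h : ∃ t, N.f t = e ∧ ins t = q then outs h.choose else q

/-- The place reached by the single-token automaton from `q` after reading `w`. -/
noncomputable def tokenWord (N : SyncPN P T E) (ins outs : T → P) (q : P) (w : List E) : P :=
  w.foldl (tokenStep N ins outs) q

variable {N : SyncPN P T E} {ins outs : T → P}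

theorem tokenStep_eq_self {q : P} {e : E} (hq : ∀ t, N.f t = e → ins t ≠ q) :
    tokenStep N ins outs q e = q :=
  dif_neg fun ⟨t, hte, htq⟩ => hq t hte htq

theorem tokenWord_cons (q : P) (e : E) (w : List E) :
    tokenWord N ins outs q (e :: w) = tokenWord N ins outs (tokenStep N ins outs q e) w :=
  rfl

theorem tokenWord_append_singleton (q : P) (w : List E) (e : E) :
    tokenWord N ins outs q (w ++ [e]) = tokenStep N ins outs (tokenWord N ins outs q w) e :=
  List.foldl_append

namespace isSM

theorem enabled_iff (hSM : isSM N ins outs) {M : P → ℕ} {t : T} :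
    enabled N M t ↔ 1 ≤ M (ins t) := by
  refine ⟨fun h => by simpa only [hSM.1, if_true] using h (ins t), fun h p => ?_⟩
  rw [hSM.1]
  split_ifs with hp
  · exact hp ▸ h
  · exact Nat.zero_le _

theorem eq_of_label_eq (hSM : isSM N ins outs) (hdet : deterministic N) {t t' : T}
    (hlabel : N.f t = N.f t') (hins : ins t = ins t') : t = t' := by
  by_contra hne
  refine hdet (ins t) t t' hne ?_ ?_ hlabel
  · rw [hSM.1, if_pos rfl]
  · rw [hSM.1, if_pos hins]

theorem tokenStep_ins (hSM : isSM N ins outs) (hdet : deterministic N) (t : T) :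
    tokenStep N ins outs (ins t) (N.f t) = outs t := by
  have h : ∃ t', N.f t' = N.f t ∧ ins t' = ins t := ⟨t, rfl, rfl⟩
  rw [tokenStep, dif_pos h, hSM.eq_of_label_eq hdet h.choose_spec.1 h.choose_spec.2]

end isSM

end Token

section Marking

open scoped Finset

variable {P T E : Type} [Fintype T] {N : SyncPN P T E} {ins outs : T → P}

namespace isSM

theorem mem_fired (hSM : isSM N ins outs) {M : P → ℕ} {e : E} {t : T} :
    t ∈ fired N M e ↔ N.f t = e ∧ 1 ≤ M (ins t) := by
  rw [fired, Finset.mem_filter_univ, hSM.enabled_iff]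

theorem card_fired_ins_le (hSM : isSM N ins outs) (hdet : deterministic N) (M : P → ℕ) (e : E)
    (p : P) : #{t ∈ fired N M e | ins t = p} ≤ M p := by
  obtain hempty | ⟨t, ht⟩ := {t ∈ fired N M e | ins t = p}.eq_empty_or_nonempty
  · rw [hempty]
    exact Nat.zero_le _
  have hone : #{t ∈ fired N M e | ins t = p} ≤ 1 := by
    refine Finset.card_le_one.2 fun t ht t' ht' => ?_
    rw [Finset.mem_filter, hSM.mem_fired] at ht ht'
    exact hSM.eq_of_label_eq hdet (ht.1.1.trans ht'.1.1.symm) (ht.2.trans ht'.2.symm)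
  rw [Finset.mem_filter, hSM.mem_fired] at ht
  exact hone.trans (ht.2 ▸ ht.1.2)

theorem step_add_card (hSM : isSM N ins outs) (hdet : deterministic N) (M : P → ℕ) (e : E)
    (p : P) :
    step N M e p + #{t ∈ fired N M e | ins t = p} = M p + #{t ∈ fired N M e | outs t = p} := by
  have hle := hSM.card_fired_ins_le hdet M e p
  simp only [step_apply, hSM.1, hSM.2, eq_comm (a := p), ← Finset.card_filter]
  omega

theorem sum_step [Fintype P] (hSM : isSM N ins outs) (hdet : deterministic N) (M : P → ℕ)
    (e : E) : ∑ p, step N M e p = ∑ p, M p := by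
  have card_fired (g : T → P) : #(fired N M e) = ∑ p, #{t ∈ fired N M e | g t = p} :=
    Finset.card_eq_sum_card_fiberwise fun _ _ => Finset.mem_coe.2 (Finset.mem_univ _)
  apply Nat.add_right_cancel (m := #(fired N M e))
  calc ∑ p, step N M e p + #(fired N M e)
      = ∑ p, (step N M e p + #{t ∈ fired N M e | ins t = p}) := by
        rw [card_fired ins, Finset.sum_add_distrib]
    _ = ∑ p, (M p + #{t ∈ fired N M e | outs t = p}) :=
        Finset.sum_congr rfl fun p _ => hSM.step_add_card hdet M e p
    _ = ∑ p, M p + #(fired N M e) := by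
        rw [card_fired outs, Finset.sum_add_distrib]

theorem sum_stepWord [Fintype P] (hSM : isSM N ins outs) (hdet : deterministic N) (M : P → ℕ)
    (w : List E) : ∑ p, stepWord N M w p = ∑ p, M p := by
  induction w generalizing M with
  | nil => rfl
  | cons e w ih => exact (ih (step N M e)).trans (hSM.sum_step hdet M e)

theorem step_eq_add_card (hSM : isSM N ins outs) (hdet : deterministic N) (M : P → ℕ) {e : E}
    {p : P} (hp : ∀ t, N.f t = e → ins t ≠ p) :
    step N M e p = M p + #{t ∈ fired N M e | outs t = p} := by
  rw [← hSM.step_add_card hdet, Finset.filter_false_of_mem, Finset.card_empty, add_zero]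
  exact fun t ht => hp t (hSM.mem_fired.1 ht).1

theorem le_step (hSM : isSM N ins outs) (hdet : deterministic N) (M : P → ℕ) {e : E} {p : P}
    (hp : ∀ t, N.f t = e → ins t ≠ p) : M p ≤ step N M e p :=
  hSM.step_eq_add_card hdet M hp ▸ Nat.le_add_right _ _

theorem le_stepWord (hSM : isSM N ins outs) (hdet : deterministic N) (M : P → ℕ) {w : List E}
    {p : P} (hp : ∀ t, N.f t ∈ w → ins t ≠ p) : M p ≤ stepWord N M w p := by
  induction w generalizing M with
  | nil => exact le_rfl
  | cons e w ih =>
    exact (hSM.le_step hdet M fun t ht => hp t (ht ▸ List.mem_cons_self)).trans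
      (ih _ fun t ht => hp t (List.mem_cons_of_mem _ ht))

theorem card_fired_outs_pos (hSM : isSM N ins outs) {M : P → ℕ} {t : T} (ht : 1 ≤ M (ins t)) :
    0 < #{t' ∈ fired N M (N.f t) | outs t' = outs t} :=
  Finset.card_pos.2 ⟨t, Finset.mem_filter.2 ⟨hSM.mem_fired.2 ⟨rfl, ht⟩, rfl⟩⟩

theorem one_le_step_tokenStep (hSM : isSM N ins outs) (hdet : deterministic N) {M : P → ℕ}
    {q : P} (hq : 1 ≤ M q) (e : E) : 1 ≤ step N M e (tokenStep N ins outs q e) := by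
  by_cases hmove : ∃ t, N.f t = e ∧ ins t = q
  · obtain ⟨t, rfl, rfl⟩ := hmove
    rw [hSM.tokenStep_ins hdet]
    have hstep := hSM.step_add_card hdet M (N.f t) (outs t)
    have hout := hSM.card_fired_ins_le hdet M (N.f t) (outs t)
    have hin := hSM.card_fired_outs_pos hq
    omega
  · have hstay : ∀ t, N.f t = e → ins t ≠ q := fun t hte htq => hmove ⟨t, hte, htq⟩
    rw [tokenStep_eq_self hstay]
    exact hq.trans (hSM.le_step hdet M hstay)

theorem lt_step_tokenStep (hSM : isSM N ins outs) (hdet : deterministic N) {M : P → ℕ} {q : P}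
    {e : E} (hq : 1 ≤ M q) (hne : tokenStep N ins outs q e ≠ q)
    (hfix : ∀ t, N.f t = e → ins t ≠ tokenStep N ins outs q e) :
    M (tokenStep N ins outs q e) < step N M e (tokenStep N ins outs q e) := by
  obtain ⟨t, rfl, rfl⟩ : ∃ t, N.f t = e ∧ ins t = q := by
    by_contra! hstay
    exact hne (tokenStep_eq_self hstay)
  rw [hSM.step_eq_add_card hdet M hfix, hSM.tokenStep_ins hdet]
  exact Nat.lt_add_of_pos_right (hSM.card_fired_outs_pos hq)

theorem lt_stepWord_tokenWord (hSM : isSM N ins outs) (hdet : deterministic N) {M : P → ℕ}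
    {q : P} {w : List E} (hq : 1 ≤ M q) (hne : tokenWord N ins outs q w ≠ q)
    (hfix : ∀ t, N.f t ∈ w → ins t ≠ tokenWord N ins outs q w) :
    M (tokenWord N ins outs q w) < stepWord N M w (tokenWord N ins outs q w) := by
  induction w generalizing M q with
  | nil => exact absurd rfl hne
  | cons e w ih =>
    rw [tokenWord_cons] at hne hfix ⊢
    rw [stepWord_cons]
    set q' := tokenStep N ins outs q e
    have hfix_head : ∀ t, N.f t = e → ins t ≠ tokenWord N ins outs q' w :=
      fun t ht => hfix t (ht ▸ List.mem_cons_self)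
    have hfix_tail : ∀ t, N.f t ∈ w → ins t ≠ tokenWord N ins outs q' w :=
      fun t ht => hfix t (List.mem_cons_of_mem _ ht)
    by_cases harrived : tokenWord N ins outs q' w = q'
    · rw [harrived] at hne hfix_head hfix_tail ⊢
      exact (hSM.lt_step_tokenStep hdet hq hne hfix_head).trans_le
        (hSM.le_stepWord hdet _ hfix_tail)
    · exact (hSM.le_step hdet M hfix_head).trans_lt
        (ih (hSM.one_le_step_tokenStep hdet hq e) harrived hfix_tail)

end isSM

end Marking

section Synchronization

theorem eq_single_of_sum_le {ι R : Type*} [Fintype ι] [DecidableEq ι] [AddCommMonoid R]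
    [PartialOrder R] [IsOrderedCancelAddMonoid R] [CanonicallyOrderedAdd R] {f : ι → R} {i : ι}
    (hle : ∑ j, f j ≤ f i) : f = Pi.single i (∑ j, f j) := by
  have hzero : ∀ j, j ≠ i → f j = 0 := fun j hj => by
    by_contra hne
    exact hle.not_gt (Finset.single_lt_sum hj (Finset.mem_univ i) (Finset.mem_univ j)
      (pos_iff_ne_zero.2 hne) fun _ _ _ => zero_le)
  funext j
  obtain rfl | hj := eq_or_ne j i
  · rw [Pi.single_eq_same, Fintype.sum_eq_single j hzero]
  · rw [Pi.single_eq_of_ne hj, hzero j hj]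

variable {P T E : Type} [Fintype P] [Fintype T] {N : SyncPN P T E} {ins outs : T → P}

namespace isSM

theorem min_sum_le_stepWord (hSM : isSM N ins outs) (hdet : deterministic N) {w : List E} {p : P}
    (hsync : ∀ q, tokenWord N ins outs q w = p) (hfix : ∀ t, N.f t ∈ w → ins t ≠ p)
    (M : P → ℕ) : min (M p + 1) (∑ q, M q) ≤ stepWord N M w p := by
  obtain hge | hlt := le_or_gt (∑ q, M q) (M p)
  · exact (min_le_right _ _).trans (hge.trans (hSM.le_stepWord hdet M hfix))
  · obtain ⟨q, hne, hq⟩ : ∃ q, q ≠ p ∧ M q ≠ 0 := by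
      by_contra! hzero
      exact hlt.ne' (Fintype.sum_eq_single p hzero)
    have hgain := hSM.lt_stepWord_tokenWord hdet (w := w) (Nat.one_le_iff_ne_zero.2 hq)
    rw [hsync] at hgain
    exact (min_le_left _ _).trans (hgain hne.symm hfix)

theorem min_sum_le_stepWord_replicate (hSM : isSM N ins outs) (hdet : deterministic N) {w : List E}
    {p : P} (hsync : ∀ q, tokenWord N ins outs q w = p) (hfix : ∀ t, N.f t ∈ w → ins t ≠ p)
    (M : P → ℕ) (n : ℕ) :
    min (M p + n) (∑ q, M q) ≤ stepWord N M (List.replicate n w).flatten p := by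
  induction n generalizing M with
  | zero => exact min_le_left _ _
  | succ n ih =>
    rw [List.replicate_succ, List.flatten_cons, stepWord_append]
    have hround := hSM.min_sum_le_stepWord hdet hsync hfix M
    have hrest := ih (stepWord N M w)
    rw [hSM.sum_stepWord hdet] at hrest
    omega

theorem stepWord_replicate_sum_eq_single (hSM : isSM N ins outs) (hdet : deterministic N)
    {w : List E} {p : P} (hsync : ∀ q, tokenWord N ins outs q w = p)
    (hfix : ∀ t, N.f t ∈ w → ins t ≠ p) (M : P → ℕ) :
    stepWord N M (List.replicate (∑ q, M q) w).flatten = Pi.single p (∑ q, M q) := by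
  have hsum := hSM.sum_stepWord hdet M (List.replicate (∑ q, M q) w).flatten
  have hmin := hSM.min_sum_le_stepWord_replicate hdet hsync hfix M (∑ q, M q)
  rw [min_eq_right (Nat.le_add_left _ _)] at hmin
  rw [eq_single_of_sum_le (hsum.trans_le hmin), hsum]

end isSM

end Synchronization

section Path

variable {P T E : Type}

/-- The word `f(t₀) … f(t_{j-1})` of labels of the first `j` transitions of `ts`. -/
def labelWord (N : SyncPN P T E) (ts : ℕ → T) (j : ℕ) : List E :=
  (List.range j).map fun i => N.f (ts i)

theorem labelWord_succ (N : SyncPN P T E) (ts : ℕ → T) (j : ℕ) :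
    labelWord N ts (j + 1) = labelWord N ts j ++ [N.f (ts j)] := by
  rw [labelWord, List.range_succ, List.map_append, List.map_singleton, labelWord]

/-- `t₀ … t_{r-1}` is a synchronizing transition sequence for all places and `pbar`, along the path
`⟨p₀ t₀ p₁ … t_{r-1} p_r⟩`. Transitions are numbered from `0`, so `t_k` of the paper is
`ts (k - 1)`; `label_ne` is (C1) and `label_ne_of_return` is (C2). -/
structure IsSTS (N : SyncPN P T E) (ins outs : T → P) (r : ℕ) (ps : ℕ → P) (ts : ℕ → T)
    (pbar : P) : Prop where
  path : ∀ i < r, ins (ts i) = ps i ∧ outs (ts i) = ps (i + 1)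
  visits : ∀ p : P, ∃ i ≤ r, ps i = p
  last : ps r = pbar
  ne_last : ∀ i < r, ps i ≠ pbar
  label_ne : ∀ t' : T, (∀ i < r, ts i ≠ t') → ∀ i < r, N.f t' ≠ N.f (ts i)
  label_ne_of_return : ∀ i k, i < k → k ≤ r → ps i = ps k →
    ∀ j, j + 1 < k → N.f (ts j) ≠ N.f (ts (k - 1))

namespace IsSTS

variable {N : SyncPN P T E} {ins outs : T → P} {r : ℕ} {ps : ℕ → P} {ts : ℕ → T}
  {pbar : P}

theorem exists_eq_of_label_eq (hσ : IsSTS N ins outs r ps ts pbar) {t : T} {j : ℕ} (hj : j < r)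
    (ht : N.f t = N.f (ts j)) : ∃ n < r, ts n = t := by
  by_contra! hne
  exact hσ.label_ne t hne j hj ht

theorem ins_ne (hσ : IsSTS N ins outs r ps ts pbar) {t : T}
    (ht : N.f t ∈ labelWord N ts r) : ins t ≠ pbar := by
  obtain ⟨j, hj, htj⟩ := List.mem_map.1 ht
  obtain ⟨n, hn, rfl⟩ := hσ.exists_eq_of_label_eq (List.mem_range.1 hj) htj.symm
  exact (hσ.path n hn).1 ▸ hσ.ne_last n hn

theorem ne_tokenStep (hσ : IsSTS N ins outs r ps ts pbar) (hSM : isSM N ins outs)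
    (hdet : deterministic N) {j : ℕ} (hj : j < r) {q : P} (hq : ∀ m ≤ j, ps m ≠ q) :
    ∀ m ≤ j, ps m ≠ tokenStep N ins outs q (N.f (ts j)) := by
  by_cases hmove : ∃ t, N.f t = N.f (ts j) ∧ ins t = q
  · obtain ⟨t, hlabel, rfl⟩ := hmove
    obtain ⟨n, hn, rfl⟩ := hσ.exists_eq_of_label_eq hj hlabel
    have hjn : j < n := by
      by_contra! hnj
      exact hq n hnj (hσ.path n hn).1.symm
    rw [← hlabel, hSM.tokenStep_ins hdet, (hσ.path n hn).2]
    intro m hm hreturn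
    exact hσ.label_ne_of_return m (n + 1) (by omega) hn hreturn j (by omega) hlabel.symm
  · rwa [tokenStep_eq_self fun t hlabel hins => hmove ⟨t, hlabel, hins⟩]

theorem tokenWord_eq_or_ne (hσ : IsSTS N ins outs r ps ts pbar) (hSM : isSM N ins outs)
    (hdet : deterministic N) (q : P) {j : ℕ} (hj : j ≤ r) :
    tokenWord N ins outs q (labelWord N ts j) = ps j ∨
      ∀ m < j, ps m ≠ tokenWord N ins outs q (labelWord N ts j) := by
  induction j with
  | zero => exact Or.inr fun m hm => absurd hm (Nat.not_lt_zero m)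
  | succ j ih =>
    rw [labelWord_succ, tokenWord_append_singleton]
    set q' := tokenWord N ins outs q (labelWord N ts j)
    by_cases hon : q' = ps j
    · left
      rw [hon, ← (hσ.path j hj).1, hSM.tokenStep_ins hdet, (hσ.path j hj).2]
    · have hoff : ∀ m ≤ j, ps m ≠ q' := fun m hm => by
        obtain hlt | rfl := hm.lt_or_eq
        · exact (ih (by omega)).resolve_left hon m hlt
        · exact Ne.symm hon
      exact Or.inr fun m hm => hσ.ne_tokenStep hSM hdet hj hoff m (Nat.le_of_lt_succ hm)

theorem tokenWord_eq (hσ : IsSTS N ins outs r ps ts pbar) (hSM : isSM N ins outs)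
    (hdet : deterministic N) (q : P) :
    tokenWord N ins outs q (labelWord N ts r) = pbar := by
  rw [← hσ.last]
  refine (hσ.tokenWord_eq_or_ne hSM hdet q le_rfl).elim id fun hnew => ?_
  obtain ⟨i, hi, hvisit⟩ := hσ.visits (tokenWord N ins outs q (labelWord N ts r))
  obtain hlt | rfl := hi.lt_or_eq
  · exact absurd hvisit (hnew i hlt)
  · exact hvisit.symm

end IsSTS

end Path

theorem STS_gives_k_SS_general {P T E : Type} [Fintype P] [Fintype T]
    {N : SyncPN P T E} {ins outs : T → P}
    (hSM : isSM N ins outs) (hdet : deterministic N)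
    {r : ℕ} {ps : ℕ → P} {ts : ℕ → T} {pbar : P} (hσ : IsSTS N ins outs r ps ts pbar)
    (k : ℕ) (M : P → ℕ) (hM : ∑ p : P, M p = k) :
    stepWord N M (List.replicate k (labelWord N ts r)).flatten =
      fun p => if p = pbar then k else 0 := by
  subst hM
  rw [hSM.stepWord_replicate_sum_eq_single hdet (hσ.tokenWord_eq hSM hdet) (fun _ => hσ.ins_ne) M]
  exact funext (Pi.single_apply pbar _)

/-- Proposition 3: if `w` is the label word of a synchronizing transition sequence
for `P` and `p̄`, then `w^k` is a `k`-SS moving all `k` tokens to `p̄`. -/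
theorem STS_gives_k_SS {P T E : Type} [Fintype P] [Fintype T]
    (N : SyncPN P T E) (ins outs : T → P)
    (hSM : isSM N ins outs) (hdet : deterministic N)
    (hsc : stronglyConnected ins outs)
    (r : ℕ) (ps : ℕ → P) (ts : ℕ → T) (pbar : P)
    (hpath : ∀ i < r, ins (ts i) = ps i ∧ outs (ts i) = ps (i + 1))
    (hvisit : ∀ p : P, ∃ i ≤ r, ps i = p)
    (hend : ps r = pbar)
    (hnotbar : ∀ i < r, ps i ≠ pbar)
    (hC1 : ∀ t' : T, (∀ i < r, ts i ≠ t') → ∀ i < r, N.f t' ≠ N.f (ts i))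
    (hC2 : ∀ i k, i < k → k ≤ r → ps i = ps k →
      ∀ j, j + 1 < k → N.f (ts j) ≠ N.f (ts (k - 1)))
    (k : ℕ) :
    ∀ M : P → ℕ, (∑ p : P, M p = k) →
      stepWord N M
          ((List.replicate k ((List.range r).map fun i => N.f (ts i))).flatten) =
        fun p => if p = pbar then k else 0 := by
  exact STS_gives_k_SS_general hSM hdet ⟨hpath, hvisit, hend, hnotbar, hC1, hC2⟩ k
end

section
/- Let ⟨N, E, f⟩ be a deterministic synchronized state machine whose associated graph has more than one ergodic component; in particular suppose there exist two disjoint nonempty closed sets of places S₁, S₂ ⊆ P (out(t) ∈ S_i whenever in(t) ∈ S_i, for i = 1, 2). Then for every k ≥ 1 there exist no word w̄ ∈ E* and marking M̄ such that M →w̄ M̄ for every marking M with Σ_{p∈P} M(p) = k. -/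
open scoped Classical BigOperators

/-! A marked trap stays marked, and an unmarked siphon stays unmarked. A nonempty trap `S` inside a
proper siphon `Q` therefore prevents synchronization: if all tokens start at a place of `S`, then
`S` is marked at the end, whereas if all tokens start at a place outside `Q`, then `Q`, and with it
`S`, is empty at the end. In a state machine, a closed set of places is a trap and its complement is
a siphon, so one can take `S = S₁` and `Q = S₂ᶜ`. -/

namespace SyncPN

variable {P T E : Type} {N : SyncPN P T E} {S Q : Set P} {M : P → ℕ} {e : E} {p : P}

/-- A trap: every transition taking tokens from `S` also puts tokens into `S`. -/
def IsTrap (N : SyncPN P T E) (S : Set P) : Prop :=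
  ∀ t, (∃ p ∈ S, N.Pre p t ≠ 0) → ∃ p ∈ S, N.Post p t ≠ 0

/-- A siphon: every transition putting tokens into `Q` also takes tokens from `Q`. -/
def IsSiphon (N : SyncPN P T E) (Q : Set P) : Prop :=
  ∀ t, (∃ p ∈ Q, N.Post p t ≠ 0) → ∃ p ∈ Q, N.Pre p t ≠ 0

variable [Fintype T]

/-- The number of tokens put into `p` by the occurrence of `e` at `M`, that is, the first sum in
`step`. -/
noncomputable def produced (N : SyncPN P T E) (M : P → ℕ) (e : E) (p : P) : ℕ :=
  ∑ t : T, if N.f t = e ∧ enabled N M t then N.Post p t else 0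

/-- The number of tokens taken from `p` by the occurrence of `e` at `M`, that is, the second sum in
`step`. It can exceed `M p` in a net that is not deterministic, where `step` then truncates. -/
noncomputable def consumed (N : SyncPN P T E) (M : P → ℕ) (e : E) (p : P) : ℕ :=
  ∑ t : T, if N.f t = e ∧ enabled N M t then N.Pre p t else 0

theorem step_apply (N : SyncPN P T E) (M : P → ℕ) (e : E) (p : P) :
    step N M e p = M p + N.produced M e p - N.consumed M e p :=
  rfl

theorem produced_ne_zero_iff :
    N.produced M e p ≠ 0 ↔ ∃ t, N.f t = e ∧ enabled N M t ∧ N.Post p t ≠ 0 := by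
  simp [produced]

theorem consumed_ne_zero_iff :
    N.consumed M e p ≠ 0 ↔ ∃ t, N.f t = e ∧ enabled N M t ∧ N.Pre p t ≠ 0 := by
  simp [consumed]

theorem consumed_le (hdet : deterministic N) (M : P → ℕ) (e : E) (p : P) :
    N.consumed M e p ≤ M p := by
  by_cases hzero : N.consumed M e p = 0
  · simp [hzero]
  obtain ⟨t, hte, ht, htp⟩ := consumed_ne_zero_iff.mp hzero
  have hother : ∀ t', t' ≠ t → N.f t' = e → N.Pre p t' = 0 := fun t' hne ht'e => by
    by_contra ht'p
    exact hdet p t' t hne (Nat.one_le_iff_ne_zero.mpr ht'p) (Nat.one_le_iff_ne_zero.mpr htp)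
      (ht'e.trans hte.symm)
  calc N.consumed M e p = N.Pre p t := by
        rw [consumed, Fintype.sum_eq_single t fun t' hne => ?_, if_pos ⟨hte, ht⟩]
        exact ite_eq_right_iff.mpr fun ht' => hother t' hne ht'.1
    _ ≤ M p := ht p

theorem IsTrap.exists_step_ne_zero (hS : N.IsTrap S) (hdet : deterministic N)
    (hM : ∃ p ∈ S, M p ≠ 0) (e : E) : ∃ p ∈ S, step N M e p ≠ 0 := by
  obtain ⟨p, hp, hMp⟩ := hM
  by_cases hcons : N.consumed M e p = 0
  · refine ⟨p, hp, ?_⟩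
    rw [step_apply]
    omega
  · obtain ⟨t, hte, ht, htp⟩ := consumed_ne_zero_iff.mp hcons
    obtain ⟨q, hq, htq⟩ := hS t ⟨p, hp, htp⟩
    have hprod : N.produced M e q ≠ 0 := produced_ne_zero_iff.mpr ⟨t, hte, ht, htq⟩
    have hle : N.consumed M e q ≤ M q := consumed_le hdet M e q
    refine ⟨q, hq, ?_⟩
    rw [step_apply]
    omega

theorem IsTrap.exists_stepWord_ne_zero (hS : N.IsTrap S) (hdet : deterministic N)
    (hM : ∃ p ∈ S, M p ≠ 0) (w : List E) : ∃ p ∈ S, stepWord N M w p ≠ 0 := by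
  induction w generalizing M with
  | nil => exact hM
  | cons e _ ih => exact ih (hS.exists_step_ne_zero hdet hM e)

theorem IsSiphon.step_eq_zero (hQ : N.IsSiphon Q) (hM : ∀ p ∈ Q, M p = 0) (e : E) :
    ∀ p ∈ Q, step N M e p = 0 := by
  intro p hp
  have hprod : N.produced M e p = 0 := by
    by_contra hne
    obtain ⟨t, -, ht, htp⟩ := produced_ne_zero_iff.mp hne
    obtain ⟨q, hq, htq⟩ := hQ t ⟨p, hp, htp⟩
    exact htq (Nat.le_zero.mp ((ht q).trans_eq (hM q hq)))
  rw [step_apply, hM p hp, hprod, Nat.zero_add, Nat.zero_sub]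

theorem IsSiphon.stepWord_eq_zero (hQ : N.IsSiphon Q) (hM : ∀ p ∈ Q, M p = 0) (w : List E) :
    ∀ p ∈ Q, stepWord N M w p = 0 := by
  induction w generalizing M with
  | nil => exact hM
  | cons e _ ih => exact ih (hQ.step_eq_zero hM e)

end SyncPN

namespace isSM

variable {P T E : Type} {N : SyncPN P T E} {ins outs : T → P} {S : Set P}

theorem pre_ne_zero_iff (hSM : isSM N ins outs) {p : P} {t : T} :
    N.Pre p t ≠ 0 ↔ p = ins t := by
  simp [hSM.1]

theorem post_ne_zero_iff (hSM : isSM N ins outs) {p : P} {t : T} :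
    N.Post p t ≠ 0 ↔ p = outs t := by
  simp [hSM.2]

theorem isTrap_iff (hSM : isSM N ins outs) :
    N.IsTrap S ↔ ∀ t, ins t ∈ S → outs t ∈ S := by
  simp [SyncPN.IsTrap, hSM.pre_ne_zero_iff, hSM.post_ne_zero_iff]

theorem isSiphon_compl_iff (hSM : isSM N ins outs) :
    N.IsSiphon Sᶜ ↔ ∀ t, ins t ∈ S → outs t ∈ S := by
  simp [SyncPN.IsSiphon, hSM.pre_ne_zero_iff, hSM.post_ne_zero_iff, not_imp_not]

end isSM

theorem no_SS_two_ergodic_general {P T E : Type} [Fintype P] [Fintype T] {N : SyncPN P T E}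
    (hdet : deterministic N) {S Q : Set P} (hS : N.IsTrap S) (hQ : N.IsSiphon Q)
    (hSne : S.Nonempty) (hQne : Qᶜ.Nonempty) (hSQ : S ⊆ Q) {k : ℕ} (hk : 1 ≤ k) :
    ¬ ∃ (w : List E) (Mbar : P → ℕ),
        ∀ M : P → ℕ, (∑ p : P, M p = k) → stepWord N M w = Mbar := by
  rintro ⟨w, Mbar, hw⟩
  obtain ⟨a, ha⟩ := hSne
  obtain ⟨b, hb⟩ := hQne
  have hmarked : ∃ p ∈ S, Mbar p ≠ 0 := by
    rw [← hw (Pi.single a k) (by simp)]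
    exact hS.exists_stepWord_ne_zero hdet ⟨a, ha, by simpa using Nat.one_le_iff_ne_zero.mp hk⟩ w
  have hunmarked : ∀ p ∈ Q, Mbar p = 0 := by
    rw [← hw (Pi.single b k) (by simp)]
    exact hQ.stepWord_eq_zero (fun p hp => by simp [ne_of_mem_of_not_mem hp hb]) w
  obtain ⟨p, hp, hne⟩ := hmarked
  exact hne (hunmarked p (hSQ hp))

/-- Proposition 5: a deterministic synchronized state machine with two disjoint
nonempty closed sets of places (in particular, more than one ergodic component)
admits no synchronizing sequence, for any number `k ≥ 1` of tokens. -/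
theorem no_SS_two_ergodic {P T E : Type} [Fintype P] [Fintype T]
    (N : SyncPN P T E) (ins outs : T → P)
    (hSM : isSM N ins outs) (hdet : deterministic N)
    (S₁ S₂ : Finset P) (hS₁ : S₁.Nonempty) (hS₂ : S₂.Nonempty)
    (hdisj : Disjoint S₁ S₂)
    (hclosed₁ : ∀ t : T, ins t ∈ S₁ → outs t ∈ S₁)
    (hclosed₂ : ∀ t : T, ins t ∈ S₂ → outs t ∈ S₂) :
    ∀ k : ℕ, 1 ≤ k →
      ¬ ∃ (w : List E) (Mbar : P → ℕ),
          ∀ M : P → ℕ, (∑ p : P, M p = k) → stepWord N M w = Mbar := fun _ hk =>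
  no_SS_two_ergodic_general hdet (hSM.isTrap_iff.mpr hclosed₁) (hSM.isSiphon_compl_iff.mpr hclosed₂)
    hS₁ (by simpa using hS₂) (Finset.disjoint_coe.mpr hdisj).subset_compl_right hk
end
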